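/- Let w̄, v̄ be n-tuples of words such that MCAT_C(w̄, v̄) has 2n-gaps above (the set of entries of) C, and let x̄, ȳ, z̄ be n-tuples of words with typ_C(x̄, ȳ) = typ_C(w̄, v̄) (as 2n-tuples). Then there exists an n-tuple ū of words with typ_C(w̄, v̄, ū) = typ_C(x̄, ȳ, z̄) (as 3n-tuples); in particular typ_C(v̄, ū) = typ_C(ȳ, z̄) and typ_C(w̄, ū) = typ_C(x̄, z̄). -/

import Mathlib

/-!
Two tuples have the same type exactly when a map between their trees preserves longest common
prefixes and the lexicographic order, fixes the constants and sends the one tuple to the other. So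
the given isomorphism `h` on `A = MCAT C (x, y)` has to be extended to such a map on the larger tree
`S = MCAT C (x, y, z)`, and `u` is then the image of `z`.

Add the nodes of `S \ A` one at a time, shortest first. A new node with parent `d` is sent to the
image of `d` followed by one letter; the letter exists because `ℚ` is dense without endpoints, so
that a finite partial isomorphism extends by one more point. The only obstruction is a lack of room
when the new node lies below an old one, and it does not occur as long as the images of any two
comparable nodes differ in length by at least the number of steps between these nodes in `S`, a
condition that each extension preserves.

For `h` itself this condition comes from the gaps: each `z i` adds at most two nodes to the tree,
itself and the point where it branches off, so a gap of `2n` in the image accommodates all of them.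
Below a constant there need not be gaps, but there `h` is the identity and `S` already fits.
-/

namespace CLTL

/-- A word is a finite sequence of rationals. -/
abbrev Word := List ℚ

/-- Lexicographic order on lists over a linear order: `w ⊑ v` iff `w` is a prefix of `v`,
or they branch at some position with the letter of `w` smaller. -/
def lexLe {α : Type*} [LinearOrder α] (w v : List α) : Prop :=
  w <+: v ∨ ∃ (p : List α) (a b : α), a < b ∧ (p ++ [a]) <+: w ∧ (p ++ [b]) <+: v

/-- Longest common prefix of two lists. -/
def lcp {α : Type*} [DecidableEq α] : List α → List α → List α
  | a :: w, b :: v => if a = b then a :: lcp w v else []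
  | _, _ => []

/-- Iterated longest common prefix of a nonempty list of words. -/
def listLCP : List Word → Word
  | [] => []
  | [x] => x
  | x :: xs => lcp x (listLCP xs)

/-- Insertion of an `m`-gap at `u`. -/
def iota (u : Word) (m : ℕ) (w : Word) : Word :=
  if u <+: w then u ++ List.replicate m 0 ++ w.drop u.length else w

/-- The maximal common ancestor tree of a tuple `w` together with constants `C`:
`{ε}` together with all iterated longest common prefixes of nonempty subsets of entries. -/
def MCAT (C : List Word) {k : ℕ} (w : Fin k → Word) : Set Word :=
  insert [] { x | ∃ I : Finset (Fin (k + C.length)),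
    I.Nonempty ∧ x = listLCP (I.toList.map (Fin.append w C.get)) }

/-- `h` is the induced isomorphism witnessing `typ_C(w) = typ_C(v)`. -/
def IsInducedIso (C : List Word) {k : ℕ} (w v : Fin k → Word) (h : Word → Word) : Prop :=
  Set.BijOn h (MCAT C w) (MCAT C v) ∧
  (∀ x ∈ MCAT C w, ∀ y ∈ MCAT C w,
    (x <+: y ↔ h x <+: h y) ∧ (lexLe x y ↔ lexLe (h x) (h y))) ∧
  (∀ c ∈ C, h c = c) ∧
  (∀ i : Fin k, h (w i) = v i)

/-- `typ_C(w) = typ_C(v)`. -/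
def SameTyp (C : List Word) {k : ℕ} (w v : Fin k → Word) : Prop :=
  ∃ h : Word → Word, IsInducedIso C w v h

/-- The stretching condition on an isomorphism `h` of `MCAT_C(w)`:
`|h e| - |h d| ≥ |e| - |d|` whenever `d` is a proper prefix of `e`. -/
def StretchCond (C : List Word) {k : ℕ} (w : Fin k → Word) (h : Word → Word) : Prop :=
  ∀ d ∈ MCAT C w, ∀ e ∈ MCAT C w, d <+: e → d ≠ e →
    e.length + (h d).length ≤ (h e).length + d.length

/-- `w ≼* v` for tuples of words. -/
def Stretch (C : List Word) {k : ℕ} (w v : Fin k → Word) : Prop :=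
  ∃ h : Word → Word, IsInducedIso C w v h ∧ StretchCond C w h

/-- `≼*` on configurations. -/
def ConfigLe (C : List Word) {Q : Type*} {n : ℕ}
    (c d : Q × (Fin n → Word)) : Prop :=
  c.1 = d.1 ∧ Stretch C c.2 d.2

/-- A transition relation is type-invariant. -/
def TypeInvariant (C : List Word) {Q : Type*} {n : ℕ}
    (step : (Q × (Fin n → Word)) → (Q × (Fin n → Word)) → Prop) : Prop :=
  ∀ (q p : Q) (w v w' v' : Fin n → Word),
    step (q, w) (p, v) → SameTyp C (Fin.append w v) (Fin.append w' v') →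
      step (q, w') (p, v')

/-- Finite runs, indexed by `Fin (N+1)`. -/
def IsFinRun {Q : Type*} {n : ℕ}
    (step : (Q × (Fin n → Word)) → (Q × (Fin n → Word)) → Prop)
    {N : ℕ} (r : Fin (N + 1) → Q × (Fin n → Word)) : Prop :=
  ∀ i : Fin N, step (r i.castSucc) (r i.succ)

/-- Infinite runs. -/
def IsInfRun {Q : Type*} {n : ℕ}
    (step : (Q × (Fin n → Word)) → (Q × (Fin n → Word)) → Prop)
    (r : ℕ → Q × (Fin n → Word)) : Prop :=
  ∀ i : ℕ, step (r i) (r (i + 1))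

/-- The pair `(w, v)` (of tuples of equal type) is contracting. -/
def ContractingPair (C : List Word) {k : ℕ} (w v : Fin k → Word) : Prop :=
  ∃ h : Word → Word, IsInducedIso C w v h ∧
    ((∃ d ∈ MCAT C w, h d <+: d ∧ h d ≠ d) ∨
     (∃ d ∈ MCAT C w, ∃ e ∈ MCAT C w,
        d <+: e ∧ d ≠ e ∧ h e = e ∧ d <+: h d ∧ d ≠ h d))

/-- A set of words `T` has `n`-gaps above `B`. -/
def HasGaps (n : ℕ) (T B : Set Word) : Prop :=
  ∀ d ∈ T, ∀ e ∈ T, d <+: e → d ≠ e → (∀ b ∈ B, ¬ e <+: b) → n + d.length < e.length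

/-! ### Longest common prefixes and the lexicographic order -/

section Prefix
variable {α : Type*}

theorem prefix_antisymm {a b : List α} (hab : a <+: b) (hba : b <+: a) : a = b :=
  hab.eq_of_length_le hba.length_le

theorem eq_of_forall_prefix_iff {a b : List α} (h : ∀ t, t <+: a ↔ t <+: b) : a = b :=
  prefix_antisymm ((h a).1 List.prefix_rfl) ((h b).2 List.prefix_rfl)

theorem not_append_singleton_prefix (d : List α) (p : α) : ¬ d ++ [p] <+: d := fun h => by
  simpa using h.length_le

theorem exists_append_singleton_prefix {d a : List α} (h : d <+: a) (hne : d ≠ a) :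
    ∃ p, d ++ [p] <+: a :=
  ⟨_, List.concat_get_prefix h (h.length_le.lt_of_ne (hne ∘ h.eq_of_length))⟩

theorem append_singleton_prefix_unique {d a : List α} {p q : α} (hp : d ++ [p] <+: a)
    (hq : d ++ [q] <+: a) : p = q := by
  simpa using List.prefix_of_prefix_length_le hp hq (by simp)

theorem finite_setOf_prefix (e : List α) : {t | t <+: e}.Finite :=
  e.inits.finite_toSet.subset fun t ht => (List.mem_inits t e).2 ht

end Prefix

section LCP
variable {α : Type*} [DecidableEq α] {a b d e s t : List α}

theorem prefix_lcp_iff : t <+: lcp a b ↔ t <+: a ∧ t <+: b := by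
  induction a generalizing b t with
  | nil => simp +contextual [lcp]
  | cons x a ih =>
    cases b with
    | nil => simp +contextual [lcp]
    | cons y b =>
      cases t with
      | nil => simp
      | cons q t =>
        by_cases hxy : x = y
        · subst hxy
          simp only [lcp, if_true, List.cons_prefix_cons, ih]
          tauto
        · simp only [lcp, if_neg hxy, List.cons_prefix_cons, List.prefix_nil, reduceCtorEq,
            false_iff]
          rintro ⟨⟨rfl, -⟩, rfl, -⟩
          exact hxy rfl

theorem lcp_prefix_left (a b : List α) : lcp a b <+: a :=
  (prefix_lcp_iff.1 List.prefix_rfl).1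

theorem lcp_prefix_right (a b : List α) : lcp a b <+: b :=
  (prefix_lcp_iff.1 List.prefix_rfl).2

theorem lcp_comm (a b : List α) : lcp a b = lcp b a :=
  eq_of_forall_prefix_iff fun t => by rw [prefix_lcp_iff, prefix_lcp_iff, and_comm]

theorem lcp_eq_left_iff : lcp a b = a ↔ a <+: b :=
  ⟨fun h => h ▸ lcp_prefix_right a b,
    fun h => prefix_antisymm (lcp_prefix_left a b) (prefix_lcp_iff.2 ⟨List.prefix_rfl, h⟩)⟩

theorem lcp_eq_right_iff : lcp a b = b ↔ b <+: a := by
  rw [lcp_comm, lcp_eq_left_iff]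

theorem lcp_self (a : List α) : lcp a a = a := lcp_eq_left_iff.2 List.prefix_rfl

theorem lcp_eq_lcp_of_lcp_prefix (hds : d <+: s) (h : lcp s a <+: d) : lcp s a = lcp d a :=
  prefix_antisymm (prefix_lcp_iff.2 ⟨h, lcp_prefix_right s a⟩)
    (prefix_lcp_iff.2 ⟨(lcp_prefix_left d a).trans hds, lcp_prefix_right d a⟩)

theorem lcp_eq_lcp_of_not_prefix (hds : d <+: s) (h : ¬ d <+: a) : lcp s a = lcp d a :=
  lcp_eq_lcp_of_lcp_prefix hds <|
    (List.prefix_or_prefix_of_prefix (lcp_prefix_left s a) hds).resolve_right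
      fun h' => h (h'.trans (lcp_prefix_right s a))

theorem lcp_append_singleton {p : α} (h : ¬ d ++ [p] <+: a) : lcp (d ++ [p]) a = lcp d a :=
  lcp_eq_lcp_of_lcp_prefix (List.prefix_append d [p]) <|
    (List.prefix_concat_iff.1 (lcp_prefix_left (d ++ [p]) a)).resolve_left
      fun h' => h (lcp_eq_left_iff.1 h')

theorem lcp_eq_iff_ne {p q : α} (hp : d ++ [p] <+: a) (hq : d ++ [q] <+: b) :
    lcp a b = d ↔ p ≠ q := by
  constructor
  · rintro h rfl
    have hd := prefix_lcp_iff.2 ⟨hp, hq⟩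
    exact not_append_singleton_prefix d p (h ▸ hd)
  · intro hne
    by_contra h
    have hd : d <+: lcp a b := prefix_lcp_iff.2
      ⟨(List.prefix_append _ _).trans hp, (List.prefix_append _ _).trans hq⟩
    obtain ⟨r, hr⟩ := exists_append_singleton_prefix hd (Ne.symm h)
    obtain ⟨hra, hrb⟩ := prefix_lcp_iff.1 hr
    exact hne ((append_singleton_prefix_unique hp hra).trans
      (append_singleton_prefix_unique hrb hq))

end LCP

section Lex
variable {α : Type*} [LinearOrder α] {a b d s : List α} {p q : α}

theorem le_of_prefix (h : a <+: b) : a ≤ b :=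
  not_lt.1 h.le

theorem lt_of_prefix (h : a <+: b) (hne : a ≠ b) : a < b :=
  (le_of_prefix h).lt_of_ne hne

theorem lt_of_branch (hp : d ++ [p] <+: a) (hq : d ++ [q] <+: b) (h : p < q) : a < b := by
  obtain ⟨a, rfl⟩ := hp
  obtain ⟨b, rfl⟩ := hq
  simp only [List.append_assoc]
  exact List.append_left_lt (List.cons_lt_cons_iff.2 (Or.inl h))

theorem lt_iff_lt_of_branch (hp : d ++ [p] <+: a) (hq : d ++ [q] <+: b) (hne : p ≠ q) :
    a < b ↔ p < q :=
  ⟨fun h => hne.lt_or_gt.resolve_right fun h' => h.not_gt (lt_of_branch hq hp h'),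
    lt_of_branch hp hq⟩

theorem exists_branch_of_lt (hab : a < b) (h : ¬ a <+: b) :
    ∃ d p q, p < q ∧ d ++ [p] <+: a ∧ d ++ [q] <+: b := by
  have hba : ¬ b <+: a := fun h' => (le_of_prefix h').not_gt hab
  obtain ⟨p, hp⟩ := exists_append_singleton_prefix (lcp_prefix_left a b)
    fun h' => h (lcp_eq_left_iff.1 h')
  obtain ⟨q, hq⟩ := exists_append_singleton_prefix (lcp_prefix_right a b)
    fun h' => hba (lcp_eq_right_iff.1 h')
  exact ⟨lcp a b, p, q, (lt_iff_lt_of_branch hp hq ((lcp_eq_iff_ne hp hq).1 rfl)).1 hab, hp, hq⟩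

theorem lt_of_prefix_of_lt (hds : d <+: s) (h : ¬ d <+: a) (hda : d < a) : s < a := by
  obtain ⟨m, p, q, hpq, hp, hq⟩ := exists_branch_of_lt hda h
  exact lt_of_branch (hp.trans hds) hq hpq

theorem lexLe_iff_le : lexLe a b ↔ a ≤ b := by
  constructor
  · rintro (h | ⟨d, p, q, hpq, hp, hq⟩)
    · exact le_of_prefix h
    · exact (lt_of_branch hp hq hpq).le
  · intro hab
    by_cases h : a <+: b
    · exact Or.inl h
    · exact Or.inr (exists_branch_of_lt (hab.lt_of_ne fun h' => h (h' ▸ List.prefix_rfl)) h)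

end Lex

/-! ### Trees of lists -/

/-- A set of lists is meet-closed if it contains the longest common prefix of any two of its
elements. -/
def MeetClosed {α : Type*} [DecidableEq α] (A : Set (List α)) : Prop :=
  ∀ a ∈ A, ∀ b ∈ A, lcp a b ∈ A

section MeetClosed
variable {α : Type*} [DecidableEq α] {A : Set (List α)}

theorem MeetClosed.insert {s : List α} (hA : MeetClosed A)
    (hs : ∀ a ∈ A, lcp s a ∈ insert s A) : MeetClosed (insert s A) := by
  rintro a (rfl | ha) b (rfl | hb)
  · exact Or.inl (lcp_self _)
  · exact hs b hb
  · exact lcp_comm a b ▸ hs a ha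
  · exact Or.inr (hA a ha b hb)

theorem exists_maximal_lcp (hA : MeetClosed A) (hne : A.Nonempty) (z : List α) :
    ∃ m, m <+: z ∧ (∀ a ∈ A, lcp z a <+: m) ∧ MeetClosed (insert m A) := by
  have hbdd : BddAbove ((fun a => (lcp z a).length) '' A) :=
    ⟨z.length, by rintro _ ⟨a, -, rfl⟩; exact (lcp_prefix_left z a).length_le⟩
  obtain ⟨a₀, ha₀, hmax : (lcp z a₀).length = _⟩ := Nat.sSup_mem (hne.image _) hbdd
  refine ⟨lcp z a₀, lcp_prefix_left z a₀, fun a ha => ?_, hA.insert fun a ha => ?_⟩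
  · exact List.prefix_of_prefix_length_le (lcp_prefix_left z a) (lcp_prefix_left z a₀)
      (hmax ▸ le_csSup hbdd ⟨a, ha, rfl⟩)
  · by_cases h : lcp z a₀ <+: a
    · exact Or.inl (lcp_eq_left_iff.2 h)
    · exact Or.inr (lcp_eq_lcp_of_not_prefix (lcp_prefix_right z a₀) h ▸ hA a₀ ha₀ a ha)

theorem exists_meetClosed_insert (hA : MeetClosed A) (hne : A.Nonempty) (z : List α) :
    ∃ B, A ⊆ B ∧ z ∈ B ∧ MeetClosed B ∧ (B \ A).encard ≤ 2 := by
  obtain ⟨m, hmz, hm, hmA⟩ := exists_maximal_lcp hA hne z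
  refine ⟨insert z (insert m A), fun a ha => Or.inr (Or.inr ha), Or.inl rfl,
    hmA.insert ?_, ?_⟩
  · rintro a (rfl | ha)
    · exact Or.inr (Or.inl (lcp_eq_right_iff.2 hmz))
    · exact Or.inr (lcp_eq_lcp_of_lcp_prefix hmz (hm a ha) ▸ hmA m (Or.inl rfl) a (Or.inr ha))
  · have hsub : insert z (insert m A) \ A ⊆ {z, m} := by
      rintro t ⟨rfl | rfl | ht, htA⟩
      exacts [Or.inl rfl, Or.inr rfl, absurd ht htA]
    calc (insert z (insert m A) \ A).encard ≤ ({z, m} : Set (List α)).encard :=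
          Set.encard_le_encard hsub
      _ ≤ ({m} : Set (List α)).encard + 1 := Set.encard_insert_le _ _
      _ = 2 := by rw [Set.encard_singleton, one_add_one_eq_two]

theorem exists_meetClosed_superset (hA : MeetClosed A) (hne : A.Nonempty) {n : ℕ}
    (z : Fin n → List α) :
    ∃ B, A ⊆ B ∧ (∀ i, z i ∈ B) ∧ MeetClosed B ∧ (B \ A).encard ≤ (2 * n : ℕ) := by
  induction n with
  | zero => exact ⟨A, subset_rfl, fun i => i.elim0, hA, by simp⟩
  | succ n ih =>
    obtain ⟨B, hAB, hzB, hB, hcard⟩ := ih fun i => z i.castSucc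
    obtain ⟨D, hBD, hzD, hD, hcard'⟩ := exists_meetClosed_insert hB (hne.mono hAB) (z (Fin.last n))
    refine ⟨D, hAB.trans hBD, Fin.lastCases hzD fun i => hBD (hzB i), hD, ?_⟩
    calc (D \ A).encard ≤ ((D \ B) ∪ (B \ A)).encard :=
          Set.encard_le_encard (sdiff_triangle D B A)
      _ ≤ (D \ B).encard + (B \ A).encard := Set.encard_union_le _ _
      _ ≤ 2 + (2 * n : ℕ) := add_le_add hcard' hcard
      _ = (2 * (n + 1) : ℕ) := by push_cast; ring

end MeetClosed

/-- The number of prefixes of `t` in `A`: the position of `t` on its branch of the tree `A`. -/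
noncomputable def depth {α : Type*} (A : Set (List α)) (t : List α) : ℕ :=
  {s ∈ A | s <+: t}.ncard

/-- `d` is the parent of `e` in the tree `A`: the longest proper prefix of `e` lying in `A`. The
node `e` itself need not lie in `A`. -/
structure IsParent {α : Type*} (A : Set (List α)) (d e : List α) : Prop where
  mem : d ∈ A
  isPrefix : d <+: e
  ne : d ≠ e
  prefix_of_prefix : ∀ t ∈ A, t <+: e → t ≠ e → t <+: d

section Depth
variable {α : Type*} {A S : Set (List α)} {d e : List α}

theorem finite_setOf_mem_prefix (A : Set (List α)) (e : List α) : {s ∈ A | s <+: e}.Finite :=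
  (finite_setOf_prefix e).subset fun _ hs => hs.2

theorem exists_isParent (hd : d ∈ A) (hde : d <+: e) (hne : d ≠ e) : ∃ t, IsParent A t e := by
  obtain ⟨t, ⟨⟨htA, hte⟩, htne⟩, hmax⟩ :=
    Set.exists_max_image ({s ∈ A | s <+: e} \ {e}) List.length
      ((finite_setOf_mem_prefix A e).sdiff) ⟨d, ⟨hd, hde⟩, hne⟩
  exact ⟨t, htA, hte, htne, fun s hsA hse hsne =>
    List.prefix_of_prefix_length_le hse hte (hmax s ⟨⟨hsA, hse⟩, hsne⟩)⟩

theorem IsParent.mono (h : IsParent S d e) (hAS : A ⊆ S) (hd : d ∈ A) : IsParent A d e :=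
  ⟨hd, h.isPrefix, h.ne, fun t ht => h.prefix_of_prefix t (hAS ht)⟩

theorem IsParent.depth_eq (h : IsParent A d e) (he : e ∈ A) : depth A e = depth A d + 1 := by
  have hpath : {s ∈ A | s <+: e} = insert e {s ∈ A | s <+: d} := by
    ext t
    constructor
    · rintro ⟨htA, hte⟩
      by_cases htne : t = e
      · exact Or.inl htne
      · exact Or.inr ⟨htA, h.prefix_of_prefix t htA hte htne⟩
    · rintro (rfl | ⟨htA, htd⟩)
      · exact ⟨he, List.prefix_rfl⟩
      · exact ⟨htA, htd.trans h.isPrefix⟩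
  have hed : e ∉ {s ∈ A | s <+: d} := fun hed => h.ne (prefix_antisymm h.isPrefix hed.2)
  rw [depth, hpath, Set.ncard_insert_of_notMem hed (finite_setOf_mem_prefix A d), depth]

theorem depth_lt_depth (he : e ∈ A) (hde : d <+: e) (hne : d ≠ e) : depth A d < depth A e :=
  Set.ncard_lt_ncard
    ⟨fun _ ht => ⟨ht.1, ht.2.trans hde⟩,
      fun h => hne (prefix_antisymm hde (h ⟨he, List.prefix_rfl⟩).2)⟩
    (finite_setOf_mem_prefix A e)

theorem depth_mono (hAS : A ⊆ S) (t : List α) : depth A t ≤ depth S t :=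
  Set.ncard_le_ncard (fun _ hs => ⟨hAS hs.1, hs.2⟩) (finite_setOf_mem_prefix S t)

theorem depth_le_add_ncard (hfin : (S \ A).Finite) (t : List α) :
    depth S t ≤ depth A t + (S \ A).ncard := by
  have hsub : {s ∈ S | s <+: t} ⊆ {s ∈ A | s <+: t} ∪ (S \ A) := fun s hs => by
    by_cases hsA : s ∈ A
    · exact Or.inl ⟨hsA, hs.2⟩
    · exact Or.inr ⟨hs.1, hsA⟩
  exact (Set.ncard_le_ncard hsub ((finite_setOf_mem_prefix A t).union hfin)).trans
    (Set.ncard_union_le _ _)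

end Depth

/-! ### Tree embeddings and their extension -/

/-- `g` embeds the tree `A`: it preserves longest common prefixes and the lexicographic order. By
`IsInducedIso.treeEmbOn` and `TreeEmbOn.isInducedIso`, two tuples have the same type precisely
when such an embedding carries one to the other and fixes the constants. -/
structure TreeEmbOn {α β : Type*} [LinearOrder α] [LinearOrder β] (g : List α → List β)
    (A : Set (List α)) : Prop where
  meetClosed : MeetClosed A
  map_lcp : ∀ a ∈ A, ∀ b ∈ A, g (lcp a b) = lcp (g a) (g b)
  strictMonoOn : StrictMonoOn g A

section TreeEmbOn
variable {α β : Type*} [LinearOrder α] [LinearOrder β] {g : List α → List β}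
  {A S : Set (List α)} {a b d e s : List α}

theorem MeetClosed.treeEmbOn_id (hA : MeetClosed A) : TreeEmbOn id A :=
  ⟨hA, fun _ _ _ _ => rfl, strictMono_id.strictMonoOn A⟩

theorem TreeEmbOn.mono (hg : TreeEmbOn g S) (hA : MeetClosed A) (hAS : A ⊆ S) : TreeEmbOn g A :=
  ⟨hA, fun a ha b hb => hg.map_lcp a (hAS ha) b (hAS hb), hg.strictMonoOn.mono hAS⟩

theorem TreeEmbOn.prefix_iff (hg : TreeEmbOn g A) (ha : a ∈ A) (hb : b ∈ A) :
    g a <+: g b ↔ a <+: b := by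
  rw [← lcp_eq_left_iff, ← lcp_eq_left_iff, ← hg.map_lcp a ha b hb,
    hg.strictMonoOn.injOn.eq_iff (hg.meetClosed a ha b hb) ha]

theorem TreeEmbOn.length_lt_length (hg : TreeEmbOn g A) (hd : d ∈ A) (he : e ∈ A)
    (hde : d <+: e) (hne : d ≠ e) : (g d).length < (g e).length :=
  have hpre := (hg.prefix_iff hd he).2 hde
  hpre.length_le.lt_of_ne fun h => hne (hg.strictMonoOn.injOn hd he (hpre.eq_of_length h))

theorem TreeEmbOn.length_add_depth_le (hg : TreeEmbOn g A) (hd : d ∈ A) (he : e ∈ A)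
    (hde : d <+: e) : (g d).length + depth A e ≤ (g e).length + depth A d := by
  induction hn : e.length using Nat.strong_induction_on generalizing e with
  | _ n ih =>
    subst hn
    by_cases hne : d = e
    · rw [hne]
    obtain ⟨t, ht⟩ := exists_isParent hd hde hne
    have htlen : t.length < e.length :=
      ht.isPrefix.length_le.lt_of_ne (ht.ne ∘ ht.isPrefix.eq_of_length)
    have hlow := ih t.length htlen ht.mem (ht.prefix_of_prefix d hd hde hne) rfl
    have hstep := hg.length_lt_length ht.mem he ht.isPrefix ht.ne
    have hdepth := ht.depth_eq he
    omega

theorem TreeEmbOn.exists_letters (hg : TreeEmbOn g A) (hd : d ∈ A) (ha : a ∈ A) (hda : d <+: a)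
    (hne : d ≠ a) : ∃ p q, d ++ [p] <+: a ∧ g d ++ [q] <+: g a := by
  obtain ⟨p, hp⟩ := exists_append_singleton_prefix hda hne
  obtain ⟨q, hq⟩ := exists_append_singleton_prefix ((hg.prefix_iff hd ha).2 hda)
    (hg.strictMonoOn.injOn.ne hd ha hne)
  exact ⟨p, q, hp, hq⟩

theorem TreeEmbOn.letter_eq_iff (hg : TreeEmbOn g A) (hd : d ∈ A) (ha : a ∈ A) (hb : b ∈ A)
    {p p' : α} {q q' : β} (hp : d ++ [p] <+: a) (hq : g d ++ [q] <+: g a)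
    (hp' : d ++ [p'] <+: b) (hq' : g d ++ [q'] <+: g b) : p = p' ↔ q = q' := by
  rw [← not_iff_not, ← ne_eq, ← ne_eq, ← lcp_eq_iff_ne hp hp', ← lcp_eq_iff_ne hq hq',
    ← hg.map_lcp a ha b hb, hg.strictMonoOn.injOn.eq_iff (hg.meetClosed a ha b hb) hd]

theorem TreeEmbOn.letter_lt (hg : TreeEmbOn g A) (hd : d ∈ A) (ha : a ∈ A) (hb : b ∈ A)
    {p p' : α} {q q' : β} (hp : d ++ [p] <+: a) (hq : g d ++ [q] <+: g a)
    (hp' : d ++ [p'] <+: b) (hq' : g d ++ [q'] <+: g b) (hlt : p < p') : q < q' :=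
  have hne : q ≠ q' := fun h => hlt.ne ((hg.letter_eq_iff hd ha hb hp hq hp' hq').2 h)
  (lt_iff_lt_of_branch hq hq' hne).1 (hg.strictMonoOn ha hb (lt_of_branch hp hp' hlt))

theorem TreeEmbOn.cmp_letter_eq (hg : TreeEmbOn g A) (hd : d ∈ A) (ha : a ∈ A) (hb : b ∈ A)
    {p p' : α} {q q' : β} (hp : d ++ [p] <+: a) (hq : g d ++ [q] <+: g a)
    (hp' : d ++ [p'] <+: b) (hq' : g d ++ [q'] <+: g b) : cmp p p' = cmp q q' := by
  rcases lt_trichotomy p p' with h | h | h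
  · rw [h.cmp_eq_lt, (hg.letter_lt hd ha hb hp hq hp' hq' h).cmp_eq_lt]
  · rw [h, (hg.letter_eq_iff hd ha hb hp hq hp' hq').1 h, cmp_self_eq_eq, cmp_self_eq_eq]
  · rw [h.cmp_eq_gt, (hg.letter_lt hd hb ha hp' hq' hp hq h).cmp_eq_gt]

end TreeEmbOn

/-- The letter `ρ` sits among the letters by which the images of nodes of `A` leave `g d` as `σ`
sits among the letters by which the nodes themselves leave `d`. -/
def LetterMatch {α β : Type*} [LinearOrder α] [LinearOrder β] (g : List α → List β)
    (A : Set (List α)) (d : List α) (σ : α) (ρ : β) : Prop :=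
  ∀ a ∈ A, ∀ p q, d ++ [p] <+: a → g d ++ [q] <+: g a → cmp p σ = cmp q ρ

section LetterMatch
variable {α β : Type*} [LinearOrder α] [LinearOrder β] {g : List α → List β}
  {A : Set (List α)} {a d s : List α} {σ : α} {ρ : β}

theorem TreeEmbOn.exists_letterMatch [DenselyOrdered β] [NoMinOrder β] [NoMaxOrder β] [Nonempty β]
    (hg : TreeEmbOn g A) (hfin : A.Finite) (hd : d ∈ A) (σ : α) :
    ∃ ρ, LetterMatch g A d σ ρ := by
  let letters (a : List α) : Set (α × β) := {x | d ++ [x.1] <+: a ∧ g d ++ [x.2] <+: g a}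
  have hletters : (⋃ a ∈ A, letters a).Finite := hfin.biUnion fun a _ =>
    Set.Subsingleton.finite fun x hx y hy => Prod.ext (append_singleton_prefix_unique hx.1 hy.1)
      (append_singleton_prefix_unique hx.2 hy.2)
  have hcompat : ∀ x ∈ hletters.toFinset, ∀ y ∈ hletters.toFinset,
      cmp x.1 y.1 = cmp x.2 y.2 := by
    intro x hx y hy
    obtain ⟨a, ha, hp, hq⟩ := Set.mem_iUnion₂.1 (hletters.mem_toFinset.1 hx)
    obtain ⟨b, hb, hp', hq'⟩ := Set.mem_iUnion₂.1 (hletters.mem_toFinset.1 hy)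
    exact hg.cmp_letter_eq hd ha hb hp hq hp' hq'
  obtain ⟨ρ, hρ⟩ := Order.PartialIso.exists_across ⟨hletters.toFinset, hcompat⟩ σ
  exact ⟨ρ, fun a ha p q hp hq => hρ (p, q) <|
    hletters.mem_toFinset.2 (Set.mem_iUnion₂.2 ⟨a, ha, hp, hq⟩)⟩

theorem IsParent.lcp_eq (hd : IsParent A d s) (hsa : ¬ s <+: a) (h : lcp s a ∈ A) :
    lcp s a = lcp d a :=
  lcp_eq_lcp_of_lcp_prefix hd.isPrefix <| hd.prefix_of_prefix _ h (lcp_prefix_left s a)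
    fun h' => hsa (lcp_eq_left_iff.1 h')

theorem IsParent.not_append_singleton_prefix (hd : IsParent A d s) (hσ : d ++ [σ] <+: s)
    (hsa : ¬ s <+: a) (h : lcp s a ∈ A) : ¬ d ++ [σ] <+: a := fun hσa => by
  have hσd := prefix_lcp_iff.2 ⟨hσ, hσa⟩
  rw [hd.lcp_eq hsa h] at hσd
  exact CLTL.not_append_singleton_prefix d σ (hσd.trans (lcp_prefix_left d a))

theorem LetterMatch.prefix_iff (hρ : LetterMatch g A d σ ρ) (hg : TreeEmbOn g A)
    (hd : IsParent A d s) (hσ : d ++ [σ] <+: s) (hmeet : ¬ s <+: a → lcp s a ∈ A) (ha : a ∈ A) :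
    g d ++ [ρ] <+: g a ↔ s <+: a := by
  constructor
  · intro hρa
    by_contra hsa
    have hda : d <+: a :=
      (hg.prefix_iff hd.mem ha).1 ((List.prefix_append _ _).trans hρa)
    have hne : d ≠ a := by
      rintro rfl
      exact not_append_singleton_prefix _ _ hρa
    obtain ⟨p, hp⟩ := exists_append_singleton_prefix hda hne
    obtain rfl : p = σ := (eq_iff_eq_of_cmp_eq_cmp (hρ a ha p ρ hp hρa)).2 rfl
    exact hd.not_append_singleton_prefix hσ hsa (hmeet hsa) hp
  · intro hsa
    have hne : d ≠ a := by
      rintro rfl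
      exact hd.ne (prefix_antisymm hd.isPrefix hsa)
    obtain ⟨q, hq⟩ := exists_append_singleton_prefix
      ((hg.prefix_iff hd.mem ha).2 (hd.isPrefix.trans hsa)) (hg.strictMonoOn.injOn.ne hd.mem ha hne)
    obtain rfl : q = ρ :=
      (eq_iff_eq_of_cmp_eq_cmp (hρ a ha σ q (hσ.trans hsa) hq)).1 rfl
    exact hq

theorem LetterMatch.lt_append_of_lt (hρ : LetterMatch g A d σ ρ) (hg : TreeEmbOn g A)
    (hd : IsParent A d s) (hσ : d ++ [σ] <+: s) (hmeet : ¬ s <+: a → lcp s a ∈ A) (ha : a ∈ A)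
    (has : a < s) : g a < g d ++ [ρ] := by
  have hsa : ¬ s <+: a := fun h => (le_of_prefix h).not_gt has
  rcases le_or_gt a d with had | hda
  · exact (hg.strictMonoOn.monotoneOn ha hd.mem had).trans_lt
      (lt_of_prefix (List.prefix_append _ _) (by simp))
  · have hpre : d <+: a := by
      by_contra h
      exact (lt_of_prefix_of_lt hd.isPrefix h hda).not_gt has
    obtain ⟨p, q, hp, hq⟩ := hg.exists_letters hd.mem ha hpre hda.ne
    have hpσ : p ≠ σ := by
      rintro rfl
      exact hd.not_append_singleton_prefix hσ hsa (hmeet hsa) hp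
    have hlt := (lt_iff_lt_of_branch hp hσ hpσ).1 has
    exact lt_of_branch hq List.prefix_rfl
      ((lt_iff_lt_of_cmp_eq_cmp (hρ a ha p q hp hq)).1 hlt)

theorem LetterMatch.append_lt_of_lt (hρ : LetterMatch g A d σ ρ) (hg : TreeEmbOn g A)
    (hd : IsParent A d s) (hσ : d ++ [σ] <+: s) (hmeet : ¬ s <+: a → lcp s a ∈ A) (ha : a ∈ A)
    (hlen : s <+: a → (g d).length + 1 < (g a).length) (hsa : s < a) : g d ++ [ρ] < g a := by
  by_cases hpre : s <+: a
  · refine lt_of_prefix ((hρ.prefix_iff hg hd hσ hmeet ha).2 hpre) fun h => ?_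
    have hlt := hlen hpre
    rw [← h, List.length_append, List.length_singleton] at hlt
    exact lt_irrefl _ hlt
  have hda : d < a := (lt_of_prefix hd.isPrefix hd.ne).trans hsa
  by_cases hpre' : d <+: a
  · obtain ⟨p, q, hp, hq⟩ := hg.exists_letters hd.mem ha hpre' hda.ne
    have hpσ : σ ≠ p := by
      rintro rfl
      exact hd.not_append_singleton_prefix hσ hpre (hmeet hpre) hp
    have hlt := (lt_iff_lt_of_branch hσ hp hpσ).1 hsa
    exact lt_of_branch List.prefix_rfl hq
      ((lt_iff_lt_of_cmp_eq_cmp (cmp_eq_cmp_symm.1 (hρ a ha p q hp hq))).1 hlt)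
  · exact lt_of_prefix_of_lt (List.prefix_append _ _)
      (mt (hg.prefix_iff hd.mem ha).1 hpre') (hg.strictMonoOn hd.mem ha hda)

end LetterMatch

/-- The images under `g` of any two comparable nodes of `A` are far enough apart for all the nodes
of the larger tree `S` between them. -/
def HasRoom {α β : Type*} (S A : Set (List α)) (g : List α → List β) : Prop :=
  ∀ d ∈ A, ∀ e ∈ A, d <+: e → (g d).length + depth S e ≤ (g e).length + depth S d

section HasRoom
variable {α β : Type*} [DecidableEq α] {g : List α → List β} {A S : Set (List α)}
  {d s : List α} {v : List β}

theorem HasRoom.update_insert (hroom : HasRoom S A g) (hs : s ∉ A) (hd : IsParent A d s)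
    (hdepth : depth S s = depth S d + 1) (hv : v.length = (g d).length + 1) :
    HasRoom S (insert s A) (Function.update g s v) := by
  have heq : Set.EqOn (Function.update g s v) g A := fun a ha =>
    Function.update_of_ne (ne_of_mem_of_not_mem ha hs) v g
  have hgs : Function.update g s v s = v := Function.update_self s v g
  rintro a (rfl | ha) b (rfl | hb) hab
  · rfl
  · rw [hgs, heq hb]
    have hdb := hroom d hd.mem b hb (hd.isPrefix.trans hab)
    omega
  · rw [hgs, heq ha]
    have had := hroom a ha d hd.mem
      (hd.prefix_of_prefix a ha hab (ne_of_mem_of_not_mem ha hs))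
    omega
  · rw [heq ha, heq hb]
    exact hroom a ha b hb hab

end HasRoom

section Extension
variable {α β : Type*} [LinearOrder α] [LinearOrder β] {g : List α → List β}
  {A S : Set (List α)} {s : List α}

theorem TreeEmbOn.update_insert {v : List β} (hg : TreeEmbOn g A) (hs : s ∉ A)
    (hpre : ∀ a ∈ A, s <+: a → v <+: g a)
    (hmeet : ∀ a ∈ A, ¬ s <+: a → lcp s a ∈ A ∧ g (lcp s a) = lcp v (g a))
    (hlt : ∀ a ∈ A, a < s → g a < v) (hgt : ∀ a ∈ A, s < a → v < g a) :
    TreeEmbOn (Function.update g s v) (insert s A) := by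
  have heq : Set.EqOn (Function.update g s v) g A := fun a ha =>
    Function.update_of_ne (ne_of_mem_of_not_mem ha hs) v g
  have hgs : Function.update g s v s = v := Function.update_self s v g
  have hlcp : ∀ a ∈ A, Function.update g s v (lcp s a) = lcp v (g a) := fun a ha => by
    by_cases h : s <+: a
    · rw [lcp_eq_left_iff.2 h, hgs, lcp_eq_left_iff.2 (hpre a ha h)]
    · rw [heq (hmeet a ha h).1, (hmeet a ha h).2]
  refine ⟨hg.meetClosed.insert fun a ha => ?_, ?_, ?_⟩
  · by_cases h : s <+: a
    · exact Or.inl (lcp_eq_left_iff.2 h)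
    · exact Or.inr (hmeet a ha h).1
  · rintro a (rfl | ha) b (rfl | hb)
    · rw [lcp_self, lcp_self]
    · rw [hgs, heq hb, hlcp b hb]
    · rw [lcp_comm, hgs, heq ha, hlcp a ha, lcp_comm]
    · rw [heq ha, heq hb, heq (hg.meetClosed a ha b hb), hg.map_lcp a ha b hb]
  · rintro a (rfl | ha) b (rfl | hb) hab
    · exact absurd hab (lt_irrefl _)
    · rw [hgs, heq hb]
      exact hgt b hb hab
    · rw [hgs, heq ha]
      exact hlt a ha hab
    · rw [heq ha, heq hb]
      exact hg.strictMonoOn ha hb hab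

variable [DenselyOrdered β] [NoMinOrder β] [NoMaxOrder β] [Nonempty β]

-- The image of the new node is one letter longer than that of its parent, the least possible,
-- so that the room left above it is still sufficient.
theorem TreeEmbOn.exists_insert (hg : TreeEmbOn g A) (hroom : HasRoom S A g) (hfin : A.Finite)
    (hS : MeetClosed S) (hAS : A ⊆ S) (hnil : [] ∈ A) (hsS : s ∈ S) (hsA : s ∉ A)
    (hmin : ∀ t ∈ S, t <+: s → t ≠ s → t ∈ A) :
    ∃ f, TreeEmbOn f (insert s A) ∧ HasRoom S (insert s A) f ∧ Set.EqOn f g A := by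
  obtain ⟨d, hdS⟩ :=
    exists_isParent (hAS hnil) List.nil_prefix (ne_of_mem_of_not_mem hnil hsA)
  have hd : IsParent A d s := hdS.mono hAS (hmin d hdS.mem hdS.isPrefix hdS.ne)
  have hdepth : depth S s = depth S d + 1 := hdS.depth_eq hsS
  have hmeet : ∀ a ∈ A, ¬ s <+: a → lcp s a ∈ A := fun a ha hsa =>
    hmin _ (hS s hsS a (hAS ha)) (lcp_prefix_left s a) (mt lcp_eq_left_iff.1 hsa)
  have hlen : ∀ a ∈ A, s <+: a → (g d).length + 1 < (g a).length := fun a ha hsa => by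
    have hda := hroom d hd.mem a ha (hd.isPrefix.trans hsa)
    have hlt := depth_lt_depth (hAS ha) hsa (ne_of_mem_of_not_mem ha hsA).symm
    omega
  obtain ⟨σ, hσ⟩ := exists_append_singleton_prefix hd.isPrefix hd.ne
  obtain ⟨ρ, hρ⟩ := hg.exists_letterMatch hfin hd.mem σ
  refine ⟨Function.update g s (g d ++ [ρ]), hg.update_insert hsA ?_ ?_ ?_ ?_,
    hroom.update_insert hsA hd hdepth (by simp),
    fun a ha => Function.update_of_ne (ne_of_mem_of_not_mem ha hsA) _ g⟩
  · exact fun a ha => (hρ.prefix_iff hg hd hσ (hmeet a ha) ha).2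
  · intro a ha hsa
    have hρa := mt (hρ.prefix_iff hg hd hσ (hmeet a ha) ha).1 hsa
    refine ⟨hmeet a ha hsa, ?_⟩
    rw [hd.lcp_eq hsa (hmeet a ha hsa), hg.map_lcp d hd.mem a ha, lcp_append_singleton hρa]
  · exact fun a ha => hρ.lt_append_of_lt hg hd hσ (hmeet a ha) ha
  · exact fun a ha => hρ.append_lt_of_lt hg hd hσ (hmeet a ha) ha (hlen a ha)

theorem TreeEmbOn.exists_extension (hg : TreeEmbOn g A) (hroom : HasRoom S A g) (hfin : S.Finite)
    (hS : MeetClosed S) (hAS : A ⊆ S) (hnil : [] ∈ A) :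
    ∃ f, TreeEmbOn f S ∧ Set.EqOn f g A := by
  induction hn : (S \ A).ncard generalizing A g with
  | zero =>
    have hSA : S = A :=
      (Set.sdiff_eq_empty.1 ((Set.ncard_eq_zero hfin.sdiff).1 hn)).antisymm hAS
    exact ⟨g, hSA ▸ hg, fun _ _ => rfl⟩
  | succ n ih =>
    obtain ⟨s, ⟨hsS, hsA⟩, hmin⟩ := Set.exists_min_image (S \ A) List.length hfin.sdiff
      ((Set.ncard_pos hfin.sdiff).1 (by omega))
    have hbelow : ∀ t ∈ S, t <+: s → t ≠ s → t ∈ A := fun t htS hts hne => by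
      by_contra htA
      exact hne (hts.eq_of_length_le (hmin t ⟨htS, htA⟩))
    obtain ⟨g', hg', hroom', hgg'⟩ :=
      hg.exists_insert hroom (hfin.subset hAS) hS hAS hnil hsS hsA hbelow
    have hcard : (S \ insert s A).ncard = n := by
      have h := Set.ncard_sdiff_singleton_add_one (a := s) (s := S \ A) ⟨hsS, hsA⟩ hfin.sdiff
      rw [Set.sdiff_sdiff, Set.union_singleton] at h
      omega
    obtain ⟨f, hf, hfg'⟩ :=
      ih hg' hroom' (Set.insert_subset hsS hAS) (Set.mem_insert_of_mem s hnil) hcard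
    exact ⟨f, hf, fun a ha => (hfg' (Set.mem_insert_of_mem s ha)).trans (hgg' ha)⟩

end Extension

/-! ### Types of tuples -/

section MCAT
variable {C : List Word} {k m : ℕ} {a : Fin k → Word}

theorem prefix_listLCP_iff {t : Word} {l : List Word} (hl : l ≠ []) :
    t <+: listLCP l ↔ ∀ s ∈ l, t <+: s := by
  induction l with
  | nil => exact absurd rfl hl
  | cons s l ih =>
    cases l with
    | nil => simp [listLCP]
    | cons s' l => rw [listLCP, prefix_lcp_iff, ih (by simp), List.forall_mem_cons] <;> simp

theorem MeetClosed.listLCP_mem {T : Set Word} (hT : MeetClosed T) {l : List Word} (hl : l ≠ [])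
    (h : ∀ s ∈ l, s ∈ T) : listLCP l ∈ T := by
  induction l with
  | nil => exact absurd rfl hl
  | cons s l ih =>
    obtain ⟨hs, hmem⟩ := List.forall_mem_cons.1 h
    cases l with
    | nil => exact hs
    | cons s' l => exact hT _ hs _ (ih (by simp) hmem)

theorem nil_mem_MCAT : [] ∈ MCAT C a := Or.inl rfl

theorem append_mem_MCAT (i : Fin (k + C.length)) : Fin.append a C.get i ∈ MCAT C a :=
  Or.inr ⟨{i}, Finset.singleton_nonempty i, by simp [listLCP]⟩

theorem entry_mem_MCAT (i : Fin k) : a i ∈ MCAT C a := by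
  simpa using append_mem_MCAT (C := C) (a := a) (Fin.castAdd _ i)

theorem const_mem_MCAT {c : Word} (hc : c ∈ C) : c ∈ MCAT C a := by
  obtain ⟨i, rfl⟩ := List.get_of_mem hc
  simpa using append_mem_MCAT (C := C) (a := a) (Fin.natAdd _ i)

theorem meetClosed_MCAT : MeetClosed (MCAT C a) := by
  classical
  have hprefix {I : Finset (Fin (k + C.length))} (hI : I.Nonempty) (t : Word) :
      t <+: listLCP (I.toList.map (Fin.append a C.get)) ↔ ∀ i ∈ I, t <+: Fin.append a C.get i := by
    rw [prefix_listLCP_iff (by simpa using hI.ne_empty)]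
    simp
  rintro s (rfl | ⟨I, hI, rfl⟩) t ht
  · exact Or.inl (lcp_eq_left_iff.2 List.nil_prefix)
  rcases ht with rfl | ⟨J, hJ, rfl⟩
  · exact Or.inl (lcp_eq_right_iff.2 List.nil_prefix)
  have hIJ : (I ∪ J).Nonempty := hI.mono Finset.subset_union_left
  refine Or.inr ⟨I ∪ J, hIJ, eq_of_forall_prefix_iff fun r => ?_⟩
  rw [prefix_lcp_iff, hprefix hI, hprefix hJ, hprefix hIJ, Finset.forall_mem_union]

theorem MCAT_subset {T : Set Word} (hT : MeetClosed T) (hnil : [] ∈ T) (hC : ∀ c ∈ C, c ∈ T)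
    (ha : ∀ i, a i ∈ T) : MCAT C a ⊆ T := by
  rintro t (rfl | ⟨I, hI, rfl⟩)
  · exact hnil
  · refine hT.listLCP_mem (by simpa using hI.ne_empty) fun s hs => ?_
    obtain ⟨i, -, rfl⟩ := List.mem_map.1 hs
    induction i using Fin.addCases with
    | left i => simpa using ha i
    | right i => simpa using hC _ (List.get_mem C i)

theorem finite_MCAT : (MCAT C a).Finite := by
  refine Set.Finite.insert _ ((Set.finite_range fun I : Finset (Fin (k + C.length)) =>
    listLCP (I.toList.map (Fin.append a C.get))).subset ?_)
  rintro _ ⟨I, -, rfl⟩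
  exact ⟨I, rfl⟩

theorem MCAT_comp_subset {j : ℕ} (σ : Fin j → Fin k) : MCAT C (a ∘ σ) ⊆ MCAT C a :=
  MCAT_subset meetClosed_MCAT nil_mem_MCAT (fun _ => const_mem_MCAT) fun i => entry_mem_MCAT (σ i)

theorem MCAT_subset_MCAT_append (z : Fin m → Word) : MCAT C a ⊆ MCAT C (Fin.append a z) :=
  MCAT_subset meetClosed_MCAT nil_mem_MCAT (fun _ => const_mem_MCAT) fun i => by
    simpa using entry_mem_MCAT (C := C) (a := Fin.append a z) (Fin.castAdd m i)

theorem encard_MCAT_append_sdiff_le (z : Fin m → Word) :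
    (MCAT C (Fin.append a z) \ MCAT C a).encard ≤ (2 * m : ℕ) := by
  obtain ⟨B, haB, hzB, hB, hcard⟩ :=
    exists_meetClosed_superset (meetClosed_MCAT (C := C) (a := a)) ⟨[], nil_mem_MCAT⟩ z
  refine (Set.encard_le_encard (Set.sdiff_subset_sdiff_left ?_)).trans hcard
  refine MCAT_subset hB (haB nil_mem_MCAT) (fun c hc => haB (const_mem_MCAT hc)) fun i => ?_
  induction i using Fin.addCases with
  | left i => simpa using haB (entry_mem_MCAT i)
  | right i => simpa using hzB i

end MCAT

section IsInducedIso
variable {C : List Word} {k : ℕ} {a b : Fin k → Word} {g h : Word → Word} {s t : Word}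

theorem IsInducedIso.map_nil (hh : IsInducedIso C a b h) : h [] = [] := by
  obtain ⟨t, ht, hht⟩ := hh.1.surjOn (nil_mem_MCAT (C := C) (a := b))
  have hpre := (hh.2.1 [] nil_mem_MCAT t ht).1.1 List.nil_prefix
  exact List.prefix_nil.1 (hht ▸ hpre)

theorem IsInducedIso.map_lcp (hh : IsInducedIso C a b h) (hs : s ∈ MCAT C a)
    (ht : t ∈ MCAT C a) : h (lcp s t) = lcp (h s) (h t) := by
  have hst := meetClosed_MCAT s hs t ht
  obtain ⟨r, hr, hhr⟩ := hh.1.surjOn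
    (meetClosed_MCAT (h s) (hh.1.mapsTo hs) (h t) (hh.1.mapsTo ht))
  have hrs : r <+: s := (hh.2.1 r hr s hs).1.2 (hhr ▸ lcp_prefix_left _ _)
  have hrt : r <+: t := (hh.2.1 r hr t ht).1.2 (hhr ▸ lcp_prefix_right _ _)
  refine prefix_antisymm (prefix_lcp_iff.2 ⟨(hh.2.1 _ hst s hs).1.1 (lcp_prefix_left s t),
    (hh.2.1 _ hst t ht).1.1 (lcp_prefix_right s t)⟩) ?_
  exact hhr ▸ (hh.2.1 r hr _ hst).1.1 (prefix_lcp_iff.2 ⟨hrs, hrt⟩)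

theorem IsInducedIso.treeEmbOn (hh : IsInducedIso C a b h) : TreeEmbOn h (MCAT C a) where
  meetClosed := meetClosed_MCAT
  map_lcp _ hs _ ht := hh.map_lcp hs ht
  strictMonoOn s hs t ht hst := by
    have hle := (hh.2.1 s hs t ht).2.1 (lexLe_iff_le.2 hst.le)
    exact (lexLe_iff_le.1 hle).lt_of_ne (hh.1.injOn.ne hs ht hst.ne)

theorem TreeEmbOn.image_MCAT (hg : TreeEmbOn g (MCAT C a)) (hnil : g [] = [])
    (hC : ∀ c ∈ C, g c = c) (hab : ∀ i, g (a i) = b i) : g '' MCAT C a = MCAT C b := by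
  apply Set.Subset.antisymm
  · have hsub : MCAT C a ⊆ {t ∈ MCAT C a | g t ∈ MCAT C b} := by
      refine MCAT_subset ?_ ⟨nil_mem_MCAT, hnil.symm ▸ nil_mem_MCAT⟩
        (fun c hc => ⟨const_mem_MCAT hc, (hC c hc).symm ▸ const_mem_MCAT hc⟩)
        fun i => ⟨entry_mem_MCAT i, hab i ▸ entry_mem_MCAT i⟩
      rintro s ⟨hs, hgs⟩ t ⟨ht, hgt⟩
      exact ⟨meetClosed_MCAT s hs t ht,
        hg.map_lcp s hs t ht ▸ meetClosed_MCAT (g s) hgs (g t) hgt⟩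
    exact Set.image_subset_iff.2 fun t ht => (hsub ht).2
  · refine MCAT_subset ?_ ⟨[], nil_mem_MCAT, hnil⟩ (fun c hc => ⟨c, const_mem_MCAT hc, hC c hc⟩)
      fun i => ⟨a i, entry_mem_MCAT i, hab i⟩
    rintro _ ⟨s, hs, rfl⟩ _ ⟨t, ht, rfl⟩
    exact ⟨lcp s t, meetClosed_MCAT s hs t ht, hg.map_lcp s hs t ht⟩

theorem TreeEmbOn.isInducedIso (hg : TreeEmbOn g (MCAT C a)) (hnil : g [] = [])
    (hC : ∀ c ∈ C, g c = c) (hab : ∀ i, g (a i) = b i) : IsInducedIso C a b g := by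
  refine ⟨hg.image_MCAT hnil hC hab ▸ hg.strictMonoOn.injOn.bijOn_image, fun s hs t ht => ?_,
    hC, hab⟩
  rw [hg.prefix_iff hs ht, lexLe_iff_le, lexLe_iff_le, hg.strictMonoOn.le_iff_le hs ht]
  exact ⟨Iff.rfl, Iff.rfl⟩

theorem SameTyp.symm (hab : SameTyp C a b) : SameTyp C b a := by
  obtain ⟨h, hbij, hord, hC, hh⟩ := hab
  have hinv := hbij.invOn_invFunOn
  have hbij' := hbij.symm hinv.symm
  refine ⟨Function.invFunOn h (MCAT C a), hbij', fun s hs t ht => ?_, fun c hc => ?_,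
    fun i => ?_⟩
  · have h' := hord _ (hbij'.mapsTo hs) _ (hbij'.mapsTo ht)
    rw [hinv.2 hs, hinv.2 ht] at h'
    exact ⟨h'.1.symm, h'.2.symm⟩
  · simpa only [hC c hc] using hinv.1 (const_mem_MCAT hc)
  · simpa only [hh i] using hinv.1 (entry_mem_MCAT i)

theorem SameTyp.comp {j : ℕ} (hab : SameTyp C a b) (σ : Fin j → Fin k) :
    SameTyp C (a ∘ σ) (b ∘ σ) := by
  obtain ⟨h, hh⟩ := hab
  exact ⟨h, (hh.treeEmbOn.mono meetClosed_MCAT (MCAT_comp_subset σ)).isInducedIso hh.map_nil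
    hh.2.2.1 fun i => hh.2.2.2 (σ i)⟩

theorem SameTyp.append_comp {j m : ℕ} {u z : Fin m → Word}
    (h : SameTyp C (Fin.append a u) (Fin.append b z)) (σ : Fin j → Fin k) :
    SameTyp C (Fin.append (a ∘ σ) u) (Fin.append (b ∘ σ) z) := by
  have hσ (c : Fin k → Word) (y : Fin m → Word) :
      Fin.append c y ∘ Fin.append (Fin.castAdd m ∘ σ) (Fin.natAdd k) = Fin.append (c ∘ σ) y := by
    ext1 i
    induction i using Fin.addCases <;> simp
  exact hσ a u ▸ hσ b z ▸ h.comp (Fin.append (Fin.castAdd m ∘ σ) (Fin.natAdd k))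

theorem IsInducedIso.map_eq_self (hh : IsInducedIso C a b h) (ht : t ∈ MCAT C a)
    (hmem : h t ∈ C) : h t = t :=
  hh.1.injOn (const_mem_MCAT hmem) ht (hh.2.2.1 (h t) hmem)

-- Away from the constants, the gap in the last step towards `e` alone accommodates all the nodes
-- of `S` outside `MCAT C a`.
theorem IsInducedIso.hasRoom {N : ℕ} {S : Set Word} (hh : IsInducedIso C a b h)
    (hC : ∀ c ∈ C, ∀ c' : Word, c' <+: c → c' ∈ C) (hgap : HasGaps N (MCAT C b) {c | c ∈ C})
    (hS : MeetClosed S) (haS : MCAT C a ⊆ S) (hcard : (S \ MCAT C a).encard ≤ N) :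
    HasRoom S (MCAT C a) h := by
  intro d hd e he hde
  have hg := hh.treeEmbOn
  have hhde : h d <+: h e := (hg.prefix_iff hd he).2 hde
  by_cases hconst : ∃ c ∈ C, h e <+: c
  · obtain ⟨c, hc, hec⟩ := hconst
    rw [hh.map_eq_self he (hC c hc _ hec), hh.map_eq_self hd (hC c hc _ (hhde.trans hec))]
    exact hS.treeEmbOn_id.length_add_depth_le (haS hd) (haS he) hde
  by_cases hne : d = e
  · rw [hne]
  obtain ⟨d', hd'⟩ := exists_isParent hd hde hne
  have hlow : (h d).length + depth (MCAT C a) d' ≤ (h d').length + depth (MCAT C a) d :=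
    hg.length_add_depth_le hd hd'.mem (hd'.prefix_of_prefix d hd hde hne)
  have hstep : N + (h d').length < (h e).length :=
    hgap _ (hh.1.mapsTo hd'.mem) _ (hh.1.mapsTo he) ((hg.prefix_iff hd'.mem he).2 hd'.isPrefix)
      (hh.1.injOn.ne hd'.mem he hd'.ne) fun c hc hec => hconst ⟨c, hc, hec⟩
  obtain ⟨hfin, hncard⟩ := Set.encard_le_coe_iff_finite_ncard_le.1 hcard
  have hparent := hd'.depth_eq he
  have hmono := depth_mono haS d
  have hadd := depth_le_add_ncard hfin e
  omega

end IsInducedIso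

theorem stmt14_general (C : List Word) (hC : ∀ c ∈ C, ∀ c' : Word, c' <+: c → c' ∈ C) {k m : ℕ}
    (a b : Fin k → Word) (z : Fin m → Word) (hgap : HasGaps (2 * m) (MCAT C b) {c | c ∈ C})
    (htyp : SameTyp C a b) :
    ∃ u : Fin m → Word, SameTyp C (Fin.append b u) (Fin.append a z) := by
  obtain ⟨h, hh⟩ := htyp
  have hsub := MCAT_subset_MCAT_append (C := C) (a := a) z
  have hroom := hh.hasRoom hC hgap meetClosed_MCAT hsub (encard_MCAT_append_sdiff_le z)
  obtain ⟨f, hf, hfh⟩ :=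
    hh.treeEmbOn.exists_extension hroom finite_MCAT meetClosed_MCAT hsub nil_mem_MCAT
  refine ⟨f ∘ z, SameTyp.symm ⟨f, hf.isInducedIso ?_ (fun c hc => ?_) fun i => ?_⟩⟩
  · rw [hfh nil_mem_MCAT, hh.map_nil]
  · rw [hfh (const_mem_MCAT hc), hh.2.2.1 c hc]
  · induction i using Fin.addCases with
    | left i => simpa using (hfh (entry_mem_MCAT i)).trans (hh.2.2.2 i)
    | right i => simp

/-- If `MCAT_C(w̄, v̄)` has `2n`-gaps above `C` and `typ_C(x̄, ȳ) = typ_C(w̄, v̄)`, then for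
every `z̄` there is a tuple `ū` with `typ_C(w̄, v̄, ū) = typ_C(x̄, ȳ, z̄)`; in particular
`typ_C(v̄, ū) = typ_C(ȳ, z̄)` and `typ_C(w̄, ū) = typ_C(x̄, z̄)`. -/
theorem stmt14 (C : List Word) (hC : ∀ c ∈ C, ∀ c' : Word, c' <+: c → c' ∈ C)
    {n : ℕ} (w v x y z : Fin n → Word)
    (hgap : HasGaps (2 * n) (MCAT C (Fin.append w v)) {c | c ∈ C})
    (htyp : SameTyp C (Fin.append x y) (Fin.append w v)) :
    ∃ u : Fin n → Word,
      SameTyp C (Fin.append (Fin.append w v) u) (Fin.append (Fin.append x y) z) ∧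
      SameTyp C (Fin.append v u) (Fin.append y z) ∧
      SameTyp C (Fin.append w u) (Fin.append x z) := by
  obtain ⟨u, hu⟩ := stmt14_general C hC (Fin.append x y) (Fin.append w v) z hgap htyp
  refine ⟨u, hu, ?_, ?_⟩
  · simpa only [Function.comp_def, Fin.append_right] using hu.append_comp (Fin.natAdd n)
  · simpa only [Function.comp_def, Fin.append_left] using hu.append_comp (Fin.castAdd n)

end CLTL
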